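/- arXiv:1311.5392 — 2 statements merged into one kernel-verified Lean document; each statement's English description precedes it below -/
import Mathlib

section
/- Define u(ψ) = 𝓕₁²(ψ)/𝓕₀²(ψ), Y(ψ) = (𝓕₀²(ψ)+𝓕₂²(ψ))/(2𝓕₀²(ψ)), Z(ψ) = (𝓕₀¹(ψ)−𝓕₂¹(ψ))/(2√(2𝓕₀²(ψ))) and Z_⊥(ψ) = (𝓕₀¹(ψ)+𝓕₂¹(ψ))/(2√(2𝓕₀²(ψ))). Then, as ψ → (3π/4)⁻ (so that u(ψ) → 1): Y(ψ) = 2u(ψ) − 1 + O((1−u(ψ))²), Z(ψ) = (14^{5/4}/√(30π)) (1−u(ψ))^{5/4} + O((1−u(ψ))^{9/4}), and Z_⊥(ψ) = (√5 · 14^{1/4}/√(6π)) (1−u(ψ))^{1/4} + O((1−u(ψ))^{5/4}). -/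
open MeasureTheory Set Filter Asymptotics

/-- `C(ψ) = π` for `0 ≤ ψ ≤ π/4`, `C(ψ) = arccos(-cot ψ)` for `π/4 < ψ < 3π/4`. -/
noncomputable def Cpsi (ψ : ℝ) : ℝ :=
  if ψ ≤ Real.pi / 4 then Real.pi else Real.arccos (-(Real.cos ψ / Real.sin ψ))

/-- `𝓕_N^s(ψ) = (1/(πΓ(s+1))) ∫₀^{C(ψ)} cos(Nθ)(cos ψ + sin ψ cos θ)^s dθ`. -/
noncomputable def calF (N : ℕ) (s ψ : ℝ) : ℝ :=
  (1 / (Real.pi * Real.Gamma (s + 1))) *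
    ∫ θ in (0 : ℝ)..Cpsi ψ, Real.cos (N * θ) * (Real.cos ψ + Real.sin ψ * Real.cos θ) ^ s

/-- `u(ψ) = 𝓕₁²(ψ)/𝓕₀²(ψ)`. -/
noncomputable def uFun (ψ : ℝ) : ℝ := calF 1 2 ψ / calF 0 2 ψ

/-- `Y(ψ) = (𝓕₀²(ψ)+𝓕₂²(ψ))/(2𝓕₀²(ψ))`. -/
noncomputable def Yfun (ψ : ℝ) : ℝ := (calF 0 2 ψ + calF 2 2 ψ) / (2 * calF 0 2 ψ)

/-- `Z(ψ) = (𝓕₀¹(ψ)-𝓕₂¹(ψ))/(2√(2𝓕₀²(ψ)))`. -/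
noncomputable def Zfun (ψ : ℝ) : ℝ :=
  (calF 0 1 ψ - calF 2 1 ψ) / (2 * Real.sqrt (2 * calF 0 2 ψ))

/-- `Z_⊥(ψ) = (𝓕₀¹(ψ)+𝓕₂¹(ψ))/(2√(2𝓕₀²(ψ)))`. -/
noncomputable def Zperp (ψ : ℝ) : ℝ :=
  (calF 0 1 ψ + calF 2 1 ψ) / (2 * Real.sqrt (2 * calF 0 2 ψ))

/-! For `π/4 < ψ < 3π/4` the cutoff `c = C(ψ)` satisfies `cos ψ = -sin ψ cos c`, so
`cos ψ + sin ψ cos θ = sin ψ (cos θ - cos c)`, and since `cos (N θ)` is a polynomial in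
`1 - cos θ`, each `𝓕_N^s` with `s ∈ ℕ` is a combination of the cosine moments
`∫₀^c (1 - cos x)^m (cos x - cos c)^s dx`. The powers of `sin ψ` cancel in `u`, `Y`, `Z` and `Z_⊥`,
which are therefore functions of `c` alone, and `c → 0⁺` as `ψ → (3π/4)⁻`. The moment with exponents
`m, n` equals `K c^(2(m+n)+1) (1 + O(c²))` for an explicit `K`. In particular
`1 - u = c²/14 (1 + O(c²))`, and eliminating `c` gives the expansions in powers of `1 - u`. -/

open Real Topology

/-! ### Leading terms at `0⁺` -/

/-- `f c = K c^p + O(c^(p+d))` as `c → 0⁺`: the function `f` has leading term `K c^p`, up to a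
relative error of order `c^d`. -/
def HasLeadingTerm (f : ℝ → ℝ) (K p d : ℝ) : Prop :=
  (fun c => f c - K * c ^ p) =O[𝓝[>] 0] fun c => c ^ (p + d)

lemma tendsto_rpow_nhdsGT_zero {d : ℝ} (hd : 0 < d) :
    Tendsto (fun c : ℝ => c ^ d) (𝓝[>] 0) (𝓝 0) := by
  simpa [zero_rpow hd.ne'] using
    ((continuousAt_rpow_const 0 d (Or.inr hd.le)).tendsto.mono_left nhdsWithin_le_nhds)

lemma rpow_isBigO_rpow_nhdsGT_zero {p q : ℝ} (h : p ≤ q) :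
    (fun c : ℝ => c ^ q) =O[𝓝[>] 0] fun c => c ^ p := by
  refine .of_bound' ?_
  filter_upwards [Ioo_mem_nhdsGT (zero_lt_one' ℝ)] with c ⟨hc₀, hc₁⟩
  rw [norm_of_nonneg (by positivity), norm_of_nonneg (by positivity)]
  exact rpow_le_rpow_of_exponent_ge hc₀ hc₁.le h

lemma hasLeadingTerm_iff_div {f : ℝ → ℝ} {K p d : ℝ} :
    HasLeadingTerm f K p d ↔ (fun c => f c / c ^ p - K) =O[𝓝[>] 0] fun c => c ^ d := by
  have scale {g : ℝ → ℝ} {q r : ℝ} (h : g =O[𝓝[>] 0] fun c => c ^ q) :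
      (fun c => c ^ r * g c) =O[𝓝[>] 0] fun c => c ^ (r + q) := by
    refine ((isBigO_refl (fun c : ℝ => c ^ r) _).mul h).congr' .rfl ?_
    filter_upwards [self_mem_nhdsWithin] with c hc using (rpow_add hc r q).symm
  constructor <;> intro h
  · refine (scale (r := -p) h).congr' ?_ (by simp)
    filter_upwards [self_mem_nhdsWithin] with c hc
    have : 0 < c ^ p := rpow_pos_of_pos hc p
    rw [rpow_neg (le_of_lt hc)]
    field_simp
  · refine (scale (r := p) h).congr' ?_ .rfl
    filter_upwards [self_mem_nhdsWithin] with c hc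
    have : 0 < c ^ p := rpow_pos_of_pos hc p
    field_simp

namespace HasLeadingTerm

variable {f g : ℝ → ℝ} {K L p q d : ℝ}

lemma tendsto_div (hf : HasLeadingTerm f K p d) (hd : 0 < d) :
    Tendsto (fun c => f c / c ^ p) (𝓝[>] 0) (𝓝 K) := by
  simpa using
    ((hasLeadingTerm_iff_div.1 hf).trans_tendsto (tendsto_rpow_nhdsGT_zero hd)).add_const K

lemma eventually_pos (hf : HasLeadingTerm f K p d) (hd : 0 < d) (hK : 0 < K) :
    ∀ᶠ c in 𝓝[>] 0, 0 < f c := by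
  filter_upwards [(hf.tendsto_div hd).eventually_const_lt hK, self_mem_nhdsWithin] with c h hc
  exact (div_pos_iff_of_pos_right (rpow_pos_of_pos hc p)).1 h

lemma isBigO (hf : HasLeadingTerm f K p d) (hd : 0 < d) : f =O[𝓝[>] 0] fun c => c ^ p := by
  simpa using (hf.trans (rpow_isBigO_rpow_nhdsGT_zero (by linarith))).add
    ((isBigO_refl (fun c : ℝ => c ^ p) _).const_mul_left K)

lemma rpow_isBigO (hf : HasLeadingTerm f K p d) (hd : 0 < d) (hK : K ≠ 0) :
    (fun c => c ^ p) =O[𝓝[>] 0] f := by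
  have hinv : (fun c => (f c / c ^ p)⁻¹) =O[𝓝[>] 0] fun _ => (1 : ℝ) :=
    ((hf.tendsto_div hd).inv₀ hK).isBigO_one ℝ
  refine ((isBigO_refl f _).mul hinv).congr' ?_ (by simp)
  filter_upwards [(hf.tendsto_div hd).eventually_ne hK] with c hquot
  have hfc : f c ≠ 0 := (div_ne_zero_iff.1 hquot).1
  field_simp

lemma congr_params (hf : HasLeadingTerm f K p d) (hK : K = L) (hp : p = q) :
    HasLeadingTerm f L q d :=
  hK ▸ hp ▸ hf

lemma const_mul (hf : HasLeadingTerm f K p d) (a : ℝ) :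
    HasLeadingTerm (fun c => a * f c) (a * K) p d :=
  (hf.const_mul_left a).congr_left fun c => by ring

lemma add_of_le (hf : HasLeadingTerm f K p d) (hg : HasLeadingTerm g L q d) (hd : 0 < d)
    (hq : p + d ≤ q) : HasLeadingTerm (fun c => f c + g c) K p d :=
  (hf.add ((hg.isBigO hd).trans (rpow_isBigO_rpow_nhdsGT_zero hq))).congr_left fun c => by ring

lemma sub_of_le (hf : HasLeadingTerm f K p d) (hg : HasLeadingTerm g L q d) (hd : 0 < d)
    (hq : p + d ≤ q) : HasLeadingTerm (fun c => f c - g c) K p d := by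
  simpa [sub_eq_add_neg] using hf.add_of_le (hg.const_mul (-1)) hd hq

lemma mul (hf : HasLeadingTerm f K p d) (hg : HasLeadingTerm g L q d) (hd : 0 < d) :
    HasLeadingTerm (fun c => f c * g c) (K * L) (p + q) d := by
  have hf' := hasLeadingTerm_iff_div.1 hf
  have hg' := hasLeadingTerm_iff_div.1 hg
  have h₁ : (fun c => f c / c ^ p * (g c / c ^ q - L)) =O[𝓝[>] 0] fun c => c ^ d := by
    simpa using ((hf.tendsto_div hd).isBigO_one ℝ).mul hg'
  refine hasLeadingTerm_iff_div.2 ((h₁.add (hf'.const_mul_left L)).congr' ?_ .rfl)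
  filter_upwards [self_mem_nhdsWithin] with c hc
  rw [rpow_add hc]
  ring

lemma isBigO_comp_div (hf : HasLeadingTerm f K p d) (hd : 0 < d) {φ : ℝ → ℝ}
    (hφ : DifferentiableAt ℝ φ K) :
    (fun c => φ (f c / c ^ p) - φ K) =O[𝓝[>] 0] fun c => c ^ d :=
  (hφ.isBigO_sub.comp_tendsto (hf.tendsto_div hd)).trans (hasLeadingTerm_iff_div.1 hf)

lemma rpow (hf : HasLeadingTerm f K p d) (hd : 0 < d) (hK : 0 < K) (r : ℝ) :
    HasLeadingTerm (fun c => f c ^ r) (K ^ r) (p * r) d := by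
  have hdiff : DifferentiableAt ℝ (fun y : ℝ => y ^ r) K :=
    (hasDerivAt_rpow_const (Or.inl hK.ne')).differentiableAt
  refine hasLeadingTerm_iff_div.2 ((hf.isBigO_comp_div hd hdiff).congr' ?_ .rfl)
  filter_upwards [self_mem_nhdsWithin, hf.eventually_pos hd hK] with c hc hfc
  have hc₀ : 0 ≤ c := le_of_lt hc
  rw [div_rpow hfc.le (rpow_nonneg hc₀ p), rpow_mul hc₀]

lemma inv (hf : HasLeadingTerm f K p d) (hd : 0 < d) (hK : K ≠ 0) :
    HasLeadingTerm (fun c => (f c)⁻¹) K⁻¹ (-p) d := by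
  refine hasLeadingTerm_iff_div.2
    ((hf.isBigO_comp_div hd (differentiableAt_inv hK)).congr' ?_ .rfl)
  filter_upwards [self_mem_nhdsWithin] with c hc
  rw [rpow_neg (le_of_lt hc), inv_div, div_inv_eq_mul, div_eq_inv_mul]

lemma div (hf : HasLeadingTerm f K p d) (hg : HasLeadingTerm g L q d) (hd : 0 < d) (hL : L ≠ 0) :
    HasLeadingTerm (fun c => f c / g c) (K / L) (p - q) d := by
  simpa only [div_eq_mul_inv, sub_eq_add_neg] using hf.mul (hg.inv hd hL) hd

lemma sqrt (hf : HasLeadingTerm f K p d) (hd : 0 < d) (hK : 0 < K) :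
    HasLeadingTerm (fun c => √(f c)) (√K) (p / 2) d := by
  simpa [sqrt_eq_rpow, div_eq_mul_inv] using hf.rpow hd hK (1 / 2)

lemma sub_rpow_isBigO (hf : HasLeadingTerm f K p d) (hg : HasLeadingTerm g L q d) (hd : 0 < d)
    (hL : 0 < L) (hq : q ≠ 0) :
    (fun c => f c - K / L ^ (p / q) * g c ^ (p / q)) =O[𝓝[>] 0] fun c => g c ^ ((p + d) / q) := by
  have hpow (r : ℝ) : HasLeadingTerm (fun c => g c ^ (r / q)) (L ^ (r / q)) r d := by
    simpa only [mul_div_cancel₀ r hq] using hg.rpow hd hL (r / q)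
  have herror : (fun c : ℝ => c ^ (p + d)) =O[𝓝[>] 0] fun c => g c ^ ((p + d) / q) :=
    (hpow (p + d)).rpow_isBigO hd (rpow_pos_of_pos hL _).ne'
  refine IsBigO.trans (.congr_left (hf.sub ((hpow p).const_mul (K / L ^ (p / q)))) ?_) herror
  intro c
  have : 0 < L ^ (p / q) := rpow_pos_of_pos hL _
  field_simp
  ring

end HasLeadingTerm

/-! ### Cosine moments -/

/-- The cosine moment `∫₀^c (1 - cos x)^m (cos x - cos c)^n dx`. With `c = C(ψ)`, every `𝓕_N^n(ψ)`
is a linear combination of these, because `cos (N x)` is a polynomial in `1 - cos x`. -/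
noncomputable def cosMoment (m n : ℕ) (c : ℝ) : ℝ :=
  ∫ x in (0 : ℝ)..c, (1 - cos x) ^ m * (cos x - cos c) ^ n

/-- The leading coefficient of `cosMoment m n`: the integrand with `x = c t` is replaced by its
leading term as `c → 0`. -/
noncomputable def cosMomentCoeff (m n : ℕ) : ℝ :=
  ∫ t in (0 : ℝ)..1, (t ^ 2 / 2) ^ m * ((1 - t ^ 2) / 2) ^ n

lemma cosMoment_pos (m n : ℕ) {c : ℝ} (hc : 0 < c) (hcπ : c ≤ π) : 0 < cosMoment m n c := by
  refine intervalIntegral.intervalIntegral_pos_of_pos_on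
    (Continuous.intervalIntegrable (by fun_prop) _ _) (fun x ⟨hx₀, hxc⟩ => ?_) hc
  have hx_lt_one : cos x < 1 :=
    cos_zero ▸ cos_lt_cos_of_nonneg_of_le_pi le_rfl (hxc.le.trans hcπ) hx₀
  have hc_lt_x : cos c < cos x := cos_lt_cos_of_nonneg_of_le_pi hx₀.le hcπ hxc
  have := sub_pos.2 hx_lt_one
  have := sub_pos.2 hc_lt_x
  positivity

lemma sin_mem_Icc_mul_self {x c : ℝ} (hx : 0 ≤ x) (hxc : x ≤ c) :
    sin x ∈ Icc ((1 - c ^ 2 / 6) * x) x := by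
  have hsq : x * x ^ 2 ≤ x * c ^ 2 := by gcongr
  exact ⟨by linarith [sin_ge_sub_cube hx], sin_le hx⟩

lemma cos_sub_cos_mem_Icc {x y c : ℝ} (hx : 0 ≤ x) (hxy : x ≤ y) (hyc : y ≤ c) (hc : c ≤ 1) :
    cos x - cos y ∈ Icc ((1 - c ^ 2 / 3) * ((y ^ 2 - x ^ 2) / 2)) ((y ^ 2 - x ^ 2) / 2) := by
  have hc₂ : c ^ 2 ≤ 1 := pow_le_one₀ (by linarith) hc
  have hε : 0 ≤ 1 - c ^ 2 / 6 := by linarith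
  have ha : 0 ≤ (y + x) / 2 := by linarith
  have hb : 0 ≤ (y - x) / 2 := by linarith
  obtain ⟨hla, hua⟩ := sin_mem_Icc_mul_self ha (show (y + x) / 2 ≤ c by linarith)
  obtain ⟨hlb, hub⟩ := sin_mem_Icc_mul_self hb (show (y - x) / 2 ≤ c by linarith)
  have hsin_a : 0 ≤ sin ((y + x) / 2) := (mul_nonneg hε ha).trans hla
  have hsin_b : 0 ≤ sin ((y - x) / 2) := (mul_nonneg hε hb).trans hlb
  have hprod : cos x - cos y = 2 * sin ((y + x) / 2) * sin ((y - x) / 2) := by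
    rw [two_mul_sin_mul_sin]
    ring_nf
  rw [hprod]
  constructor
  · calc (1 - c ^ 2 / 3) * ((y ^ 2 - x ^ 2) / 2)
        ≤ (1 - c ^ 2 / 6) ^ 2 * ((y ^ 2 - x ^ 2) / 2) := by
          gcongr
          · nlinarith
          · nlinarith [sq_nonneg (c ^ 2)]
      _ = 2 * ((1 - c ^ 2 / 6) * ((y + x) / 2)) * ((1 - c ^ 2 / 6) * ((y - x) / 2)) := by ring
      _ ≤ 2 * sin ((y + x) / 2) * sin ((y - x) / 2) := by gcongr
  · calc 2 * sin ((y + x) / 2) * sin ((y - x) / 2)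
        ≤ 2 * ((y + x) / 2) * ((y - x) / 2) := by gcongr
      _ = (y ^ 2 - x ^ 2) / 2 := by ring

lemma integral_leading_cosMoment (m n : ℕ) (c : ℝ) :
    ∫ x in (0 : ℝ)..c, (x ^ 2 / 2) ^ m * ((c ^ 2 - x ^ 2) / 2) ^ n =
      cosMomentCoeff m n * c ^ (2 * (m + n) + 1) := by
  have hscale := intervalIntegral.smul_integral_comp_mul_left (a := 0) (b := 1)
    (fun x : ℝ => (x ^ 2 / 2) ^ m * ((c ^ 2 - x ^ 2) / 2) ^ n) c
  have hhom (t : ℝ) : ((c * t) ^ 2 / 2) ^ m * ((c ^ 2 - (c * t) ^ 2) / 2) ^ n =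
      c ^ (2 * (m + n)) * ((t ^ 2 / 2) ^ m * ((1 - t ^ 2) / 2) ^ n) := by
    rw [show (c * t) ^ 2 / 2 = c ^ 2 * (t ^ 2 / 2) by ring,
      show (c ^ 2 - (c * t) ^ 2) / 2 = c ^ 2 * ((1 - t ^ 2) / 2) by ring, mul_pow, mul_pow]
    ring
  simp only [hhom, intervalIntegral.integral_const_mul, mul_zero, mul_one, smul_eq_mul] at hscale
  rw [← hscale, cosMomentCoeff]
  ring

lemma cosMoment_integrand_mem_Icc (m n : ℕ) {x c : ℝ} (hx : 0 ≤ x) (hxc : x ≤ c) (hc : c ≤ 1) :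
    (1 - cos x) ^ m * (cos x - cos c) ^ n ∈
      Icc ((1 - (m + n) * (c ^ 2 / 3)) * ((x ^ 2 / 2) ^ m * ((c ^ 2 - x ^ 2) / 2) ^ n))
        ((x ^ 2 / 2) ^ m * ((c ^ 2 - x ^ 2) / 2) ^ n) := by
  obtain ⟨hl₁, hu₁⟩ : 1 - cos x ∈ Icc ((1 - c ^ 2 / 3) * (x ^ 2 / 2)) (x ^ 2 / 2) := by
    simpa using cos_sub_cos_mem_Icc le_rfl hx hxc hc
  obtain ⟨hl₂, hu₂⟩ := cos_sub_cos_mem_Icc hx hxc le_rfl hc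
  have hc₂ : c ^ 2 ≤ 1 := pow_le_one₀ (hx.trans hxc) hc
  have hε : 0 ≤ 1 - c ^ 2 / 3 := by linarith
  have hd : 0 ≤ (c ^ 2 - x ^ 2) / 2 := by nlinarith
  have hcos₁ : 0 ≤ 1 - cos x := (mul_nonneg hε (by positivity)).trans hl₁
  have hcos₂ : 0 ≤ cos x - cos c := (mul_nonneg hε hd).trans hl₂
  have hbernoulli : 1 - (m + n) * (c ^ 2 / 3) ≤ (1 - c ^ 2 / 3) ^ (m + n) := by
    have := one_add_mul_le_pow (show -2 ≤ -(c ^ 2 / 3) by linarith) (m + n)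
    push_cast at this
    simpa [sub_eq_add_neg] using this
  refine ⟨?_, by gcongr⟩
  calc (1 - (m + n) * (c ^ 2 / 3)) * ((x ^ 2 / 2) ^ m * ((c ^ 2 - x ^ 2) / 2) ^ n)
      ≤ (1 - c ^ 2 / 3) ^ (m + n) * ((x ^ 2 / 2) ^ m * ((c ^ 2 - x ^ 2) / 2) ^ n) := by gcongr
    _ = ((1 - c ^ 2 / 3) * (x ^ 2 / 2)) ^ m * ((1 - c ^ 2 / 3) * ((c ^ 2 - x ^ 2) / 2)) ^ n := by
      rw [mul_pow, mul_pow]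
      ring
    _ ≤ (1 - cos x) ^ m * (cos x - cos c) ^ n := by gcongr

lemma cosMoment_mem_Icc (m n : ℕ) {c : ℝ} (hc₀ : 0 ≤ c) (hc₁ : c ≤ 1) :
    cosMoment m n c ∈
      Icc ((1 - (m + n) * (c ^ 2 / 3)) * (cosMomentCoeff m n * c ^ (2 * (m + n) + 1)))
        (cosMomentCoeff m n * c ^ (2 * (m + n) + 1)) := by
  rw [← integral_leading_cosMoment, ← intervalIntegral.integral_const_mul]
  constructor
  · exact intervalIntegral.integral_mono_on hc₀ (Continuous.intervalIntegrable (by fun_prop) _ _)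
      (Continuous.intervalIntegrable (by fun_prop) _ _)
      fun x hx => (cosMoment_integrand_mem_Icc m n hx.1 hx.2 hc₁).1
  · exact intervalIntegral.integral_mono_on hc₀ (Continuous.intervalIntegrable (by fun_prop) _ _)
      (Continuous.intervalIntegrable (by fun_prop) _ _)
      fun x hx => (cosMoment_integrand_mem_Icc m n hx.1 hx.2 hc₁).2

lemma hasLeadingTerm_cosMoment (m n : ℕ) :
    HasLeadingTerm (cosMoment m n) (cosMomentCoeff m n) (2 * (m + n) + 1) 2 := by
  refine .of_bound (cosMomentCoeff m n * ((m + n) / 3)) ?_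
  filter_upwards [Ioo_mem_nhdsGT (zero_lt_one' ℝ)] with c ⟨hc₀, hc₁⟩
  obtain ⟨hl, hu⟩ := cosMoment_mem_Icc m n hc₀.le hc₁.le
  have hpow : c ^ (2 * (m + n) + 1 : ℝ) = c ^ (2 * (m + n) + 1) := mod_cast rpow_natCast c _
  rw [rpow_add hc₀ _ 2, rpow_two, hpow, norm_of_nonpos (by linarith),
    norm_of_nonneg (by positivity)]
  linarith

lemma cosMomentCoeff_zero_right (m : ℕ) :
    cosMomentCoeff m 0 = 1 / (2 ^ m * (2 * m + 1)) := by
  have hintegrand (t : ℝ) : (t ^ 2 / 2) ^ m * ((1 - t ^ 2) / 2) ^ 0 = t ^ (2 * m) / 2 ^ m := by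
    rw [pow_zero, mul_one, div_pow, pow_mul]
  simp only [cosMomentCoeff, hintegrand, intervalIntegral.integral_div, integral_pow, one_pow,
    zero_pow (Nat.succ_ne_zero _)]
  push_cast
  field_simp
  ring

lemma cosMomentCoeff_succ_right (m n : ℕ) :
    cosMomentCoeff m (n + 1) = cosMomentCoeff m n / 2 - cosMomentCoeff (m + 1) n := by
  simp only [cosMomentCoeff]
  rw [← intervalIntegral.integral_div, ← intervalIntegral.integral_sub
    (Continuous.intervalIntegrable (by fun_prop) _ _)
    (Continuous.intervalIntegrable (by fun_prop) _ _)]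
  congr 1
  ext t
  ring

lemma hasLeadingTerm_cosMoment_zero_one : HasLeadingTerm (cosMoment 0 1) (1 / 3) 3 2 :=
  (hasLeadingTerm_cosMoment 0 1).congr_params
    (by norm_num [cosMomentCoeff_succ_right, cosMomentCoeff_zero_right]) (by norm_num)

lemma hasLeadingTerm_cosMoment_one_one : HasLeadingTerm (cosMoment 1 1) (1 / 30) 5 2 :=
  (hasLeadingTerm_cosMoment 1 1).congr_params
    (by norm_num [cosMomentCoeff_succ_right, cosMomentCoeff_zero_right]) (by norm_num)

lemma hasLeadingTerm_cosMoment_two_one : HasLeadingTerm (cosMoment 2 1) (1 / 140) 7 2 :=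
  (hasLeadingTerm_cosMoment 2 1).congr_params
    (by norm_num [cosMomentCoeff_succ_right, cosMomentCoeff_zero_right]) (by norm_num)

lemma hasLeadingTerm_cosMoment_zero_two : HasLeadingTerm (cosMoment 0 2) (2 / 15) 5 2 :=
  (hasLeadingTerm_cosMoment 0 2).congr_params
    (by norm_num [cosMomentCoeff_succ_right, cosMomentCoeff_zero_right]) (by norm_num)

lemma hasLeadingTerm_cosMoment_one_two : HasLeadingTerm (cosMoment 1 2) (1 / 105) 7 2 :=
  (hasLeadingTerm_cosMoment 1 2).congr_params
    (by norm_num [cosMomentCoeff_succ_right, cosMomentCoeff_zero_right]) (by norm_num)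

lemma hasLeadingTerm_cosMoment_two_two : HasLeadingTerm (cosMoment 2 2) (1 / 630) 9 2 :=
  (hasLeadingTerm_cosMoment 2 2).congr_params
    (by norm_num [cosMomentCoeff_succ_right, cosMomentCoeff_zero_right]) (by norm_num)

/-! ### The expansions in terms of `c = C(ψ)` -/

/-- The quantity `1 - u(ψ)` as a function of `c = C(ψ)`; see `one_sub_uFun`. -/
noncomputable def uDefect (c : ℝ) : ℝ := cosMoment 1 2 c / cosMoment 0 2 c

lemma hasLeadingTerm_uDefect : HasLeadingTerm uDefect (1 / 14) 2 2 :=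
  (hasLeadingTerm_cosMoment_one_two.div hasLeadingTerm_cosMoment_zero_two two_pos
    (by norm_num)).congr_params (by norm_num) (by norm_num)

lemma tendsto_uDefect : Tendsto uDefect (𝓝[>] 0) (𝓝 0) :=
  (hasLeadingTerm_uDefect.isBigO two_pos).trans_tendsto (tendsto_rpow_nhdsGT_zero two_pos)

lemma HasLeadingTerm.sub_uDefect_rpow_isBigO {f : ℝ → ℝ} {K r : ℝ}
    (hf : HasLeadingTerm f K (2 * r) 2) :
    (fun c => f c - K * 14 ^ r * uDefect c ^ r) =O[𝓝[>] 0] fun c => uDefect c ^ (r + 1) := by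
  have h := hf.sub_rpow_isBigO hasLeadingTerm_uDefect two_pos (by norm_num) two_ne_zero
  rw [mul_div_cancel_left₀ r two_ne_zero, one_div, inv_rpow (by norm_num), div_inv_eq_mul] at h
  convert h using 3
  ring

lemma cosMoment_div_isBigO_uDefect_sq :
    (fun c => cosMoment 2 2 c / cosMoment 0 2 c) =O[𝓝[>] 0] fun c => uDefect c ^ 2 := by
  have hquot : (fun c => cosMoment 2 2 c / cosMoment 0 2 c) =O[𝓝[>] 0] fun c => c ^ (4 : ℝ) :=
    ((hasLeadingTerm_cosMoment_two_two.div hasLeadingTerm_cosMoment_zero_two two_pos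
      (by norm_num)).congr_params rfl (by norm_num)).isBigO two_pos
  have hsq : HasLeadingTerm (fun c => uDefect c ^ 2) ((1 / 14) ^ 2) 4 2 := by
    simpa only [rpow_two] using
      (hasLeadingTerm_uDefect.rpow two_pos (by norm_num) 2).congr_params rfl (by norm_num)
  exact hquot.trans (hsq.rpow_isBigO two_pos (by norm_num))

lemma hasLeadingTerm_sqrt_pi_mul_cosMoment :
    HasLeadingTerm (fun c => √(π * cosMoment 0 2 c)) √(π * (2 / 15)) (5 / 2) 2 :=
  (hasLeadingTerm_cosMoment_zero_two.const_mul π).sqrt two_pos (by positivity)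

lemma hasLeadingTerm_Zfun :
    HasLeadingTerm (fun c => (2 * cosMoment 1 1 c - cosMoment 2 1 c) / √(π * cosMoment 0 2 c))
      (1 / √(30 * π)) (2 * (5 / 4)) 2 := by
  have hnum : HasLeadingTerm (fun c => 2 * cosMoment 1 1 c - cosMoment 2 1 c) (1 / 15) 5 2 :=
    ((hasLeadingTerm_cosMoment_one_one.const_mul 2).sub_of_le hasLeadingTerm_cosMoment_two_one
      two_pos (by norm_num)).congr_params (by norm_num) rfl
  have hconst : √(30 * π) = 15 * √(π * (2 / 15)) := by
    rw [show 30 * π = 15 ^ 2 * (π * (2 / 15)) by ring, sqrt_mul (by positivity),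
      sqrt_sq (by norm_num)]
  refine (hnum.div hasLeadingTerm_sqrt_pi_mul_cosMoment two_pos (by positivity)).congr_params
    ?_ (by norm_num)
  rw [hconst, div_div]

lemma hasLeadingTerm_Zperp :
    HasLeadingTerm
      (fun c => (cosMoment 0 1 c - 2 * cosMoment 1 1 c + cosMoment 2 1 c) / √(π * cosMoment 0 2 c))
      (√5 / √(6 * π)) (2 * (1 / 4)) 2 := by
  have hnum : HasLeadingTerm
      (fun c => cosMoment 0 1 c - 2 * cosMoment 1 1 c + cosMoment 2 1 c) (1 / 3) 3 2 :=
    (hasLeadingTerm_cosMoment_zero_one.sub_of_le (hasLeadingTerm_cosMoment_one_one.const_mul 2)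
      two_pos (by norm_num)).add_of_le hasLeadingTerm_cosMoment_two_one two_pos (by norm_num)
  have hconst : √(6 * π) = √5 * (3 * √(π * (2 / 15))) := by
    rw [show 6 * π = 5 * (3 ^ 2 * (π * (2 / 15))) by ring, sqrt_mul (by norm_num),
      sqrt_mul (by norm_num), sqrt_sq (by norm_num)]
  refine (hnum.div hasLeadingTerm_sqrt_pi_mul_cosMoment two_pos (by positivity)).congr_params
    ?_ (by norm_num)
  rw [hconst]
  field_simp

/-! ### Reduction of `𝓕_N^s` to cosine moments -/

section Collimation

variable {ψ : ℝ}

lemma sin_pos_of_mem_Ioo_pi_div_four (hψ : ψ ∈ Ioo (π / 4) (3 * π / 4)) : 0 < sin ψ :=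
  sin_pos_of_pos_of_lt_pi (by linarith [hψ.1, pi_pos]) (by linarith [hψ.2, pi_pos])

lemma abs_cos_div_sin_lt_one (hψ : ψ ∈ Ioo (π / 4) (3 * π / 4)) : |cos ψ / sin ψ| < 1 := by
  have hsin := sin_pos_of_mem_Ioo_pi_div_four hψ
  have hcos : cos (2 * ψ) < 0 :=
    cos_neg_of_pi_div_two_lt_of_lt (by linarith [hψ.1]) (by linarith [hψ.2])
  rw [abs_div, abs_of_pos hsin, div_lt_one hsin]
  exact abs_lt_of_sq_lt_sq (by linarith [cos_two_mul' ψ]) hsin.le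

lemma Cpsi_eq_arccos (hψ : π / 4 < ψ) : Cpsi ψ = arccos (-(cos ψ / sin ψ)) :=
  if_neg hψ.not_ge

lemma Cpsi_pos (hψ : ψ ∈ Ioo (π / 4) (3 * π / 4)) : 0 < Cpsi ψ := by
  rw [Cpsi_eq_arccos hψ.1, arccos_pos]
  linarith [abs_lt.1 (abs_cos_div_sin_lt_one hψ)]

lemma cosMoment_Cpsi_pos (m n : ℕ) (hψ : ψ ∈ Ioo (π / 4) (3 * π / 4)) :
    0 < cosMoment m n (Cpsi ψ) :=
  cosMoment_pos m n (Cpsi_pos hψ) (Cpsi_eq_arccos hψ.1 ▸ arccos_le_pi _)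

lemma cos_eq_neg_sin_mul_cos_Cpsi (hψ : ψ ∈ Ioo (π / 4) (3 * π / 4)) :
    cos ψ = -(sin ψ * cos (Cpsi ψ)) := by
  have hsin := sin_pos_of_mem_Ioo_pi_div_four hψ
  obtain ⟨hl, hu⟩ := abs_lt.1 (abs_cos_div_sin_lt_one hψ)
  rw [Cpsi_eq_arccos hψ.1, cos_arccos (by linarith) (by linarith)]
  field_simp

lemma tendsto_Cpsi : Tendsto Cpsi (𝓝[<] (3 * π / 4)) (𝓝[>] 0) := by
  have hev : ∀ᶠ ψ in 𝓝[<] (3 * π / 4), ψ ∈ Ioo (π / 4) (3 * π / 4) :=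
    Ioo_mem_nhdsLT (by linarith [pi_pos])
  have hangle : 3 * π / 4 = π - π / 4 := by ring
  have hsin : sin (3 * π / 4) = √2 / 2 := by rw [hangle, sin_pi_sub, sin_pi_div_four]
  have hcos : cos (3 * π / 4) = -(√2 / 2) := by rw [hangle, cos_pi_sub, cos_pi_div_four]
  have hcont : ContinuousAt (fun ψ => arccos (-(cos ψ / sin ψ))) (3 * π / 4) := by
    have : sin (3 * π / 4) ≠ 0 := by rw [hsin]; positivity
    fun_prop (disch := assumption)
  have hzero : arccos (-(cos (3 * π / 4) / sin (3 * π / 4))) = 0 := by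
    rw [hsin, hcos, neg_div, div_self (by positivity), neg_neg, arccos_one]
  refine tendsto_nhdsWithin_iff.2 ⟨?_, hev.mono fun ψ hψ => Cpsi_pos hψ⟩
  rw [← hzero]
  refine (hcont.tendsto.mono_left nhdsWithin_le_nhds).congr' ?_
  exact hev.mono fun ψ hψ => (Cpsi_eq_arccos hψ.1).symm

lemma calF_natCast (N s : ℕ) (hψ : ψ ∈ Ioo (π / 4) (3 * π / 4)) :
    calF N s ψ = sin ψ ^ s / (π * s.factorial) *
      ∫ x in (0 : ℝ)..Cpsi ψ, cos (N * x) * (cos x - cos (Cpsi ψ)) ^ s := by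
  have hintegrand (x : ℝ) : cos (N * x) * (cos ψ + sin ψ * cos x) ^ (s : ℝ) =
      sin ψ ^ s * (cos (N * x) * (cos x - cos (Cpsi ψ)) ^ s) := by
    rw [rpow_natCast, cos_eq_neg_sin_mul_cos_Cpsi hψ, neg_add_eq_sub, ← mul_sub, mul_pow]
    ring
  simp only [calF, hintegrand, Gamma_nat_eq_factorial, intervalIntegral.integral_const_mul]
  ring

lemma calF_zero (s : ℕ) (hψ : ψ ∈ Ioo (π / 4) (3 * π / 4)) :
    calF 0 s ψ = sin ψ ^ s / (π * s.factorial) * cosMoment 0 s (Cpsi ψ) := by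
  simp [calF_natCast 0 s hψ, cosMoment]

lemma calF_one (s : ℕ) (hψ : ψ ∈ Ioo (π / 4) (3 * π / 4)) :
    calF 1 s ψ = sin ψ ^ s / (π * s.factorial) *
      (cosMoment 0 s (Cpsi ψ) - cosMoment 1 s (Cpsi ψ)) := by
  have hintegrand (x : ℝ) : cos ((1 : ℕ) * x) * (cos x - cos (Cpsi ψ)) ^ s =
      (1 - cos x) ^ 0 * (cos x - cos (Cpsi ψ)) ^ s -
        (1 - cos x) ^ 1 * (cos x - cos (Cpsi ψ)) ^ s := by
    rw [Nat.cast_one, one_mul]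
    ring
  simp only [calF_natCast 1 s hψ, hintegrand, cosMoment]
  rw [intervalIntegral.integral_sub (Continuous.intervalIntegrable (by fun_prop) _ _)
    (Continuous.intervalIntegrable (by fun_prop) _ _)]

lemma calF_two (s : ℕ) (hψ : ψ ∈ Ioo (π / 4) (3 * π / 4)) :
    calF 2 s ψ = sin ψ ^ s / (π * s.factorial) *
      (cosMoment 0 s (Cpsi ψ) - 4 * cosMoment 1 s (Cpsi ψ) + 2 * cosMoment 2 s (Cpsi ψ)) := by
  have hintegrand (x : ℝ) : cos ((2 : ℕ) * x) * (cos x - cos (Cpsi ψ)) ^ s =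
      (1 - cos x) ^ 0 * (cos x - cos (Cpsi ψ)) ^ s -
        4 * ((1 - cos x) ^ 1 * (cos x - cos (Cpsi ψ)) ^ s) +
        2 * ((1 - cos x) ^ 2 * (cos x - cos (Cpsi ψ)) ^ s) := by
    rw [Nat.cast_ofNat, cos_two_mul]
    ring
  simp only [calF_natCast 2 s hψ, hintegrand, cosMoment]
  rw [intervalIntegral.integral_add (Continuous.intervalIntegrable (by fun_prop) _ _)
    (Continuous.intervalIntegrable (by fun_prop) _ _), intervalIntegral.integral_sub
    (Continuous.intervalIntegrable (by fun_prop) _ _)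
    (Continuous.intervalIntegrable (by fun_prop) _ _), intervalIntegral.integral_const_mul,
    intervalIntegral.integral_const_mul]

lemma one_sub_uFun (hψ : ψ ∈ Ioo (π / 4) (3 * π / 4)) : 1 - uFun ψ = uDefect (Cpsi ψ) := by
  have hsin := sin_pos_of_mem_Ioo_pi_div_four hψ
  have hmoment := cosMoment_Cpsi_pos 0 2 hψ
  have h₀ := calF_zero 2 hψ
  have h₁ := calF_one 2 hψ
  push_cast at h₀ h₁
  rw [uFun, uDefect, h₀, h₁]
  field_simp
  ring

lemma Yfun_sub_two_mul_uFun (hψ : ψ ∈ Ioo (π / 4) (3 * π / 4)) :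
    Yfun ψ - (2 * uFun ψ - 1) = cosMoment 2 2 (Cpsi ψ) / cosMoment 0 2 (Cpsi ψ) := by
  have hsin := sin_pos_of_mem_Ioo_pi_div_four hψ
  have hmoment := cosMoment_Cpsi_pos 0 2 hψ
  have h₀ := calF_zero 2 hψ
  have h₁ := calF_one 2 hψ
  have h₂ := calF_two 2 hψ
  push_cast at h₀ h₁ h₂
  rw [uFun, Yfun, h₀, h₁, h₂]
  field_simp
  ring

lemma sqrt_two_mul_calF (hψ : ψ ∈ Ioo (π / 4) (3 * π / 4)) :
    √(2 * calF 0 2 ψ) = sin ψ / π * √(π * cosMoment 0 2 (Cpsi ψ)) := by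
  have hsin := sin_pos_of_mem_Ioo_pi_div_four hψ
  have h₀ := calF_zero 2 hψ
  norm_num at h₀
  rw [h₀, show 2 * (sin ψ ^ 2 / (π * 2) * cosMoment 0 2 (Cpsi ψ)) =
    (sin ψ / π) ^ 2 * (π * cosMoment 0 2 (Cpsi ψ)) by field_simp, sqrt_mul (by positivity),
    sqrt_sq (by positivity)]

lemma Zfun_eq (hψ : ψ ∈ Ioo (π / 4) (3 * π / 4)) :
    Zfun ψ = (2 * cosMoment 1 1 (Cpsi ψ) - cosMoment 2 1 (Cpsi ψ)) /
      √(π * cosMoment 0 2 (Cpsi ψ)) := by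
  have hsin := sin_pos_of_mem_Ioo_pi_div_four hψ
  have hmoment := cosMoment_Cpsi_pos 0 2 hψ
  have h₀ := calF_zero 1 hψ
  have h₂ := calF_two 1 hψ
  norm_num at h₀ h₂
  rw [Zfun, sqrt_two_mul_calF hψ, h₀, h₂]
  field_simp
  ring

lemma Zperp_eq (hψ : ψ ∈ Ioo (π / 4) (3 * π / 4)) :
    Zperp ψ = (cosMoment 0 1 (Cpsi ψ) - 2 * cosMoment 1 1 (Cpsi ψ) + cosMoment 2 1 (Cpsi ψ)) /
      √(π * cosMoment 0 2 (Cpsi ψ)) := by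
  have hsin := sin_pos_of_mem_Ioo_pi_div_four hψ
  have hmoment := cosMoment_Cpsi_pos 0 2 hψ
  have h₀ := calF_zero 1 hψ
  have h₂ := calF_two 1 hψ
  norm_num at h₀ h₂
  rw [Zperp, sqrt_two_mul_calF hψ, h₀, h₂]
  field_simp
  ring

end Collimation

/-- As `ψ → (3π/4)⁻` (so `u(ψ) → 1`): `Y = 2u - 1 + O((1-u)²)`,
`Z = (14^{5/4}/√(30π))(1-u)^{5/4} + O((1-u)^{9/4})`, and
`Z_⊥ = (√5·14^{1/4}/√(6π))(1-u)^{1/4} + O((1-u)^{5/4})`. -/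
theorem YZ_expansion_collimation :
    Tendsto uFun (nhdsWithin (3 * Real.pi / 4) (Set.Iio (3 * Real.pi / 4))) (nhds 1) ∧
    ((fun ψ => Yfun ψ - (2 * uFun ψ - 1))
      =O[nhdsWithin (3 * Real.pi / 4) (Set.Iio (3 * Real.pi / 4))]
        fun ψ => (1 - uFun ψ) ^ 2) ∧
    ((fun ψ => Zfun ψ - (14 : ℝ) ^ ((5 : ℝ) / 4) / Real.sqrt (30 * Real.pi) *
        (1 - uFun ψ) ^ ((5 : ℝ) / 4))
      =O[nhdsWithin (3 * Real.pi / 4) (Set.Iio (3 * Real.pi / 4))]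
        fun ψ => (1 - uFun ψ) ^ ((9 : ℝ) / 4)) ∧
    ((fun ψ => Zperp ψ - Real.sqrt 5 * (14 : ℝ) ^ ((1 : ℝ) / 4) / Real.sqrt (6 * Real.pi) *
        (1 - uFun ψ) ^ ((1 : ℝ) / 4))
      =O[nhdsWithin (3 * Real.pi / 4) (Set.Iio (3 * Real.pi / 4))]
        fun ψ => (1 - uFun ψ) ^ ((5 : ℝ) / 4)) := by
  have hmem : ∀ᶠ ψ in 𝓝[<] (3 * π / 4), ψ ∈ Ioo (π / 4) (3 * π / 4) :=
    Ioo_mem_nhdsLT (by linarith [pi_pos])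
  refine ⟨?_, ?_, ?_, ?_⟩
  · have hlim := (tendsto_uDefect.comp tendsto_Cpsi).const_sub 1
    rw [sub_zero] at hlim
    refine hlim.congr' (hmem.mono fun ψ hψ => ?_)
    rw [Function.comp_apply, ← one_sub_uFun hψ, sub_sub_cancel]
  · refine (cosMoment_div_isBigO_uDefect_sq.comp_tendsto tendsto_Cpsi).congr' ?_ ?_ <;>
      filter_upwards [hmem] with ψ hψ
    · rw [Function.comp_apply, Yfun_sub_two_mul_uFun hψ]
    · rw [Function.comp_apply, one_sub_uFun hψ]
  · refine (hasLeadingTerm_Zfun.sub_uDefect_rpow_isBigO.comp_tendsto tendsto_Cpsi).congr' ?_ ?_ <;>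
      filter_upwards [hmem] with ψ hψ
    · rw [Function.comp_apply, Zfun_eq hψ, one_sub_uFun hψ, one_div_mul_eq_div]
    · norm_num [one_sub_uFun hψ]
  · refine (hasLeadingTerm_Zperp.sub_uDefect_rpow_isBigO.comp_tendsto tendsto_Cpsi).congr' ?_ ?_ <;>
      filter_upwards [hmem] with ψ hψ
    · rw [Function.comp_apply, Zperp_eq hψ, one_sub_uFun hψ, div_mul_eq_mul_div]
    · norm_num [one_sub_uFun hψ]
end

section
/- Let s > 0 and let N ≥ 0 be an integer. The Fermi integral φ_s is infinitely differentiable on ℝ, and for every A ∈ ℝ and every B with 0 ≤ B < π the series Σ_{n=0}^∞ [ φ_s^{(N+2n)}(A) / (n! (N+n)!) ] (B/2)^{N+2n} converges and its sum equals 𝓘_N^s(A,B), where φ_s^{(j)} denotes the j-th derivative of φ_s. -/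
open MeasureTheory Set

/-- The Fermi integral of order `s`: `φ_s(x) = (1/Γ(s)) ∫₀^∞ t^{s-1}/(e^{t-x}+1) dt`. -/
noncomputable def fermi (s x : ℝ) : ℝ :=
  (1 / Real.Gamma s) * ∫ t in Set.Ioi (0 : ℝ), t ^ (s - 1) / (Real.exp (t - x) + 1)

/-- `𝓘_N^s(A,B) = (1/π) ∫₀^π cos(Nθ) φ_s(A + B cos θ) dθ`. -/
noncomputable def calI (N : ℕ) (s A B : ℝ) : ℝ :=
  (1 / Real.pi) * ∫ θ in (0 : ℝ)..Real.pi, Real.cos (N * θ) * fermi s (A + B * Real.cos θ)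

/-!
On the strip `|Im z| < π` the point `e^{-z}` avoids `(-∞, 0]`, so `φ_s`, which is the Stieltjes
transform of a finite measure evaluated at `e^{-z}`, extends holomorphically there. Hence the Taylor
series of `φ_s` at `A` represents it on `(A - π, A + π)`, and it may be integrated term by term
against `cos (N θ)` along `A + B cos θ`. Expanding `cos θ` in exponentials shows that the `k`-th
moment `∫₀^π cos (N θ) cos^k θ dθ` vanishes unless `k = N + 2n`, when it is `π C(k, n) / 2^k`.
-/

section CosineMoments

open Real

lemma cos_mul_cos_pow (x y : ℝ) (k : ℕ) :
    cos x * cos y ^ k =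
      (∑ j ∈ Finset.range (k + 1), (k.choose j : ℝ) * cos (x + (2 * j - k) * y)) / 2 ^ k := by
  have exp_mul_cos_pow : Complex.exp (x * Complex.I) * (2 * Complex.cos y) ^ k =
      ∑ j ∈ Finset.range (k + 1),
        (k.choose j : ℂ) * Complex.exp ((x + (2 * j - k) * y : ℝ) * Complex.I) := by
    rw [Complex.two_cos, add_pow, Finset.mul_sum]
    refine Finset.sum_congr rfl fun j hj => ?_
    have hjk : j ≤ k := Finset.mem_range_succ_iff.1 hj
    rw [← Complex.exp_nat_mul, ← Complex.exp_nat_mul, ← mul_assoc, ← Complex.exp_add,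
      ← Complex.exp_add, mul_comm]
    push_cast [hjk]
    ring_nf
  have hre := congrArg Complex.re exp_mul_cos_pow
  simp only [← Complex.ofReal_cos, ← Complex.ofReal_ofNat, ← Complex.ofReal_natCast,
    ← Complex.ofReal_mul, ← Complex.ofReal_pow, Complex.re_mul_ofReal, Complex.re_sum,
    Complex.re_ofReal_mul, Complex.exp_ofReal_mul_I_re] at hre
  rw [eq_div_iff (by positivity), ← hre]
  ring

lemma integral_cos_int_mul (m : ℤ) :
    ∫ θ in (0 : ℝ)..π, cos (m * θ) = if m = 0 then π else 0 := by
  split_ifs with hm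
  · simp [hm]
  · rw [intervalIntegral.integral_comp_mul_left cos (Int.cast_ne_zero.2 hm)]
    simp [sin_int_mul_pi]

lemma integral_cos_int_mul_mul_cos_pow (m : ℤ) (k : ℕ) :
    ∫ θ in (0 : ℝ)..π, cos (m * θ) * cos θ ^ k =
      π / 2 ^ k * ∑ j ∈ Finset.range (k + 1), if m + 2 * j = k then (k.choose j : ℝ) else 0 := by
  have frequency (j : ℕ) (θ : ℝ) :
      cos (m * θ + (2 * j - k) * θ) = cos ((m + 2 * j - k : ℤ) * θ) := by
    push_cast
    ring_nf
  simp only [cos_mul_cos_pow, frequency, intervalIntegral.integral_div]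
  rw [intervalIntegral.integral_finsetSum fun j _ =>
    Continuous.intervalIntegrable (by fun_prop) _ _]
  simp only [intervalIntegral.integral_const_mul, integral_cos_int_mul, sub_eq_zero, mul_ite,
    mul_zero, Finset.mul_sum, Finset.sum_div, ite_div, zero_div]
  refine Finset.sum_congr rfl fun j _ => ?_
  congr 1
  ring

lemma integral_cos_nat_mul_mul_cos_pow_add_two_mul (N n : ℕ) :
    ∫ θ in (0 : ℝ)..π, cos (N * θ) * cos θ ^ (N + 2 * n) =
      π * ((N + 2 * n).choose n / 2 ^ (N + 2 * n)) := by
  have frequency_eq (j : ℕ) : (N : ℤ) + 2 * j = (N + 2 * n : ℕ) ↔ j = n := by omega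
  have h := integral_cos_int_mul_mul_cos_pow N (N + 2 * n)
  simp only [frequency_eq, Finset.sum_ite_eq', Finset.mem_range, Int.cast_natCast] at h
  rw [h, if_pos (by omega)]
  ring

lemma integral_cos_nat_mul_mul_cos_pow_eq_zero {N k : ℕ} (hk : ∀ n, N + 2 * n ≠ k) :
    ∫ θ in (0 : ℝ)..π, cos (N * θ) * cos θ ^ k = 0 := by
  have frequency_ne (j : ℕ) : (N : ℤ) + 2 * j ≠ k := mod_cast hk j
  simpa [frequency_ne] using integral_cos_int_mul_mul_cos_pow N k

end CosineMoments

section PowerSeries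

open scoped ENNReal

variable {V E : Type*} [NormedAddCommGroup V] [NormedSpace ℝ V] [NormedAddCommGroup E]
  [NormedSpace ℝ E] [CompleteSpace E]

lemma hasSum_integral_smul_comp_of_hasFPowerSeriesOnBall {X : Type*} [MeasurableSpace X]
    {μ : Measure X} {f : V → E} {p : FormalMultilinearSeries ℝ V E} {a b : V} {r : ℝ≥0∞}
    {g h : X → ℝ} (hf : HasFPowerSeriesOnBall f p a r) (hb : ‖b‖ₑ < r) (hg : Integrable g μ)
    (hh : AEStronglyMeasurable h μ) (hh_le : ∀ x, |h x| ≤ 1) :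
    HasSum (fun k => (∫ x, g x * h x ^ k ∂μ) • p k fun _ => b)
      (∫ x, g x • f (a + h x • b) ∂μ) := by
  have power_series (x : X) :
      HasSum (fun k => (g x * h x ^ k) • p k fun _ => b) (g x • f (a + h x • b)) := by
    have hmem : h x • b ∈ Metric.eball (0 : V) r := by
      rw [mem_eball_zero_iff, enorm_smul]
      refine (mul_le_of_le_one_left' ?_).trans_lt hb
      rw [Real.enorm_eq_ofReal_abs]
      exact ENNReal.ofReal_le_one.2 (hh_le x)
    simpa [(p _).map_smul_univ, mul_smul] using (hf.hasSum hmem).const_smul (g x)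
  have summable_norm : Summable fun k => ‖p k fun _ => b‖ :=
    p.summable_norm_apply (mem_eball_zero_iff.2 (hb.trans_le hf.r_le))
  simp only [← integral_smul_const]
  refine hasSum_integral_of_dominated_convergence (fun k x => ‖g x‖ * ‖p k fun _ => b‖)
    (fun k => ((hg.aestronglyMeasurable.mul (hh.pow k)).smul_const _))
    (fun k => .of_forall fun x => ?_) (.of_forall fun x => summable_norm.mul_left _) ?_
    (.of_forall power_series)
  · rw [norm_smul, norm_mul, norm_pow, Real.norm_eq_abs (h x)]
    gcongr
    exact mul_le_of_le_one_right (norm_nonneg _) (pow_le_one₀ (abs_nonneg _) (hh_le x))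
  · simp only [tsum_mul_left]
    exact hg.norm.mul_const _

lemma hasSum_integral_cos_nat_mul_smul_of_hasFPowerSeriesOnBall {f : V → E}
    {p : FormalMultilinearSeries ℝ V E} {a b : V} {r : ℝ≥0∞}
    (hf : HasFPowerSeriesOnBall f p a r) (hb : ‖b‖ₑ < r) (N : ℕ) :
    HasSum (fun n => ((N + 2 * n).choose n / 2 ^ (N + 2 * n) : ℝ) • p (N + 2 * n) fun _ => b)
      ((1 / Real.pi) • ∫ θ in (0 : ℝ)..Real.pi, Real.cos (N * θ) • f (a + Real.cos θ • b)) := by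
  have integrable_cos : Integrable (fun θ => Real.cos (N * θ)) (volume.restrict (Ioc 0 Real.pi)) :=
    (Continuous.intervalIntegrable (by fun_prop) 0 Real.pi).1
  have termwise := hasSum_integral_smul_comp_of_hasFPowerSeriesOnBall hf hb integrable_cos
    Real.continuous_cos.aestronglyMeasurable Real.abs_cos_le_one
  simp only [← intervalIntegral.integral_of_le Real.pi_pos.le] at termwise
  have index_injective : Function.Injective fun n => N + 2 * n := fun m n h => by
    simpa using h
  rw [← index_injective.hasSum_iff fun k hk => ?_] at termwise
  · refine (termwise.const_smul (1 / Real.pi)).congr_fun fun n => ?_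
    simp only [Function.comp_apply, integral_cos_nat_mul_mul_cos_pow_add_two_mul, smul_smul]
    rw [← mul_assoc, one_div_mul_cancel Real.pi_ne_zero, one_mul]
  · rw [integral_cos_nat_mul_mul_cos_pow_eq_zero fun n hn => hk ⟨n, hn⟩, zero_smul]

lemma choose_div_factorial_add_two_mul (N n : ℕ) :
    ((N + 2 * n).choose n : ℝ) / (N + 2 * n).factorial = 1 / (n.factorial * (N + n).factorial) := by
  rw [Nat.cast_choose ℝ (by omega : n ≤ N + 2 * n), show N + 2 * n - n = N + n by omega,
    div_div_cancel_left' (by positivity), one_div]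

lemma hasSum_iteratedDeriv_integral_cos_nat_mul_smul {f : ℝ → E}
    {p : FormalMultilinearSeries ℝ ℝ E} {A B : ℝ} {r : ℝ≥0∞}
    (hf : HasFPowerSeriesOnBall f p A r) (hB : ‖B‖ₑ < r) (N : ℕ) :
    HasSum (fun n => ((B / 2) ^ (N + 2 * n) / (n.factorial * (N + n).factorial)) •
        iteratedDeriv (N + 2 * n) f A)
      ((1 / Real.pi) • ∫ θ in (0 : ℝ)..Real.pi, Real.cos (N * θ) • f (A + B * Real.cos θ)) := by
  have taylor_term (k : ℕ) :
      (p k fun _ => B) = (B ^ k / k.factorial) • iteratedDeriv k f A := by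
    have factorial_smul := hf.factorial_smul B k
    rw [iteratedFDeriv_apply_eq_iteratedDeriv_mul_prod] at factorial_smul
    rw [div_eq_inv_mul, mul_smul, eq_inv_smul_iff₀ (by positivity), Nat.cast_smul_eq_nsmul,
      factorial_smul]
    simp
  have expansion := hasSum_integral_cos_nat_mul_smul_of_hasFPowerSeriesOnBall hf hB N
  simp only [smul_eq_mul, mul_comm (Real.cos _) B] at expansion
  refine expansion.congr_fun fun n => ?_
  rw [taylor_term, smul_smul]
  congr 1
  calc (B / 2) ^ (N + 2 * n) / (n.factorial * (N + n).factorial)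
      = (B / 2) ^ (N + 2 * n) * ((N + 2 * n).choose n / (N + 2 * n).factorial) := by
        rw [choose_div_factorial_add_two_mul, mul_one_div]
    _ = (N + 2 * n).choose n / 2 ^ (N + 2 * n) * (B ^ (N + 2 * n) / (N + 2 * n).factorial) := by
        rw [div_pow]
        ring

end PowerSeries

lemma differentiableAt_integral_div_add {X : Type*} [MeasurableSpace X] {μ : Measure X}
    {h a : X → ℂ} (hh : Integrable h μ) (ha : AEStronglyMeasurable a μ) {u₀ : ℂ} {ε : ℝ}
    (hε : 0 < ε) (hau₀ : ∀ x, ε ≤ ‖a x + u₀‖) :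
    DifferentiableAt ℂ (fun u => ∫ x, h x / (a x + u) ∂μ) u₀ := by
  have half_le_norm {u : ℂ} (hu : u ∈ Metric.ball u₀ (ε / 2)) (x : X) : ε / 2 ≤ ‖a x + u‖ := by
    have := norm_sub_norm_le (a x + u₀) (u₀ - u)
    rw [show a x + u₀ - (u₀ - u) = a x + u by ring] at this
    linarith [hau₀ x, mem_ball_iff_norm'.1 hu]
  have integrand_meas (u : ℂ) : AEStronglyMeasurable (fun x => h x / (a x + u)) μ :=
    (hh.aemeasurable.div (ha.aemeasurable.add_const u)).aestronglyMeasurable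
  have integrand_integrable : Integrable (fun x => h x / (a x + u₀)) μ := by
    refine (hh.norm.div_const ε).mono' (integrand_meas u₀) (.of_forall fun x => ?_)
    rw [norm_div]
    gcongr
    exact hau₀ x
  refine (hasDerivAt_integral_of_dominated_loc_of_deriv_le
    (F' := fun u x => -h x / (a x + u) ^ 2) (bound := fun x => ‖h x‖ / (ε / 2) ^ 2)
    (Metric.ball_mem_nhds u₀ (half_pos hε)) (.of_forall integrand_meas) integrand_integrable
    (hh.aemeasurable.neg.div ((ha.aemeasurable.add_const u₀).pow_const 2)).aestronglyMeasurable
    (.of_forall fun x u hu => ?_) (hh.norm.div_const _)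
    (.of_forall fun x u hu => ?_)).2.differentiableAt
  · rw [norm_div, norm_neg, norm_pow]
    gcongr
    exact half_le_norm hu x
  · have ne_zero : a x + u ≠ 0 := norm_pos_iff.1 ((half_pos hε).trans_le (half_le_norm hu x))
    simpa using (hasDerivAt_const u (h x)).fun_div ((hasDerivAt_id u).const_add (a x)) ne_zero

lemma exists_pos_forall_le_norm_ofReal_add {u : ℂ} (hu : u ∈ Complex.slitPlane) :
    ∃ ε > 0, ∀ a : ℝ, 0 ≤ a → ε ≤ ‖(a : ℂ) + u‖ := by
  obtain ⟨ε, hε, ball_subset⟩ := Metric.isOpen_iff.1 Complex.isOpen_slitPlane u hu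
  refine ⟨ε, hε, fun a ha => not_lt.1 fun hlt => ?_⟩
  have neg_mem : (-a : ℂ) ∈ Complex.slitPlane :=
    ball_subset (by rwa [mem_ball_iff_norm', sub_neg_eq_add, add_comm])
  rw [← Complex.ofReal_neg, Complex.ofReal_mem_slitPlane] at neg_mem
  linarith

/-- The extension of `fermi s` to complex arguments, meaningful on the strip `|Im z| < π`. The
kernel `1 / (e^{t-z} + 1)` is written as `e^{-t} / (e^{-t} + e^{-z})`, so that the Gamma density
appears in the numerator and the integral is a Stieltjes transform evaluated at `e^{-z}`. -/
noncomputable def complexFermi (s : ℝ) (z : ℂ) : ℂ :=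
  (1 / Real.Gamma s : ℝ) * ∫ t in Ioi (0 : ℝ),
    ((Real.exp (-t) * t ^ (s - 1) : ℝ) : ℂ) / ((Real.exp (-t) : ℝ) + Complex.exp (-z))

lemma complexFermi_ofReal (s x : ℝ) : complexFermi s x = fermi s x := by
  have kernel_eq (t : ℝ) : Real.exp (-t) * t ^ (s - 1) / (Real.exp (-t) + Real.exp (-x)) =
      t ^ (s - 1) / (Real.exp (t - x) + 1) := by
    have factor_exp_neg :
        Real.exp (-t) + Real.exp (-x) = Real.exp (-t) * (Real.exp (t - x) + 1) := by
      rw [mul_add, ← Real.exp_add, mul_one]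
      ring_nf
    rw [factor_exp_neg, mul_div_mul_left _ _ (Real.exp_ne_zero _)]
  rw [complexFermi, fermi, Complex.ofReal_mul, ← integral_complex_ofReal]
  simp only [← kernel_eq]
  norm_cast

lemma differentiableAt_complexFermi {s : ℝ} (hs : 0 < s) {z : ℂ} (hz : |z.im| < Real.pi) :
    DifferentiableAt ℂ (complexFermi s) z := by
  have exp_neg_mem_slitPlane : Complex.exp (-z) ∈ Complex.slitPlane :=
    Complex.expOpenPartialHomeomorph.map_source
      (mem_ofPred.2 (abs_lt.1 (by rwa [Complex.neg_im, abs_neg])))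
  obtain ⟨ε, hε, hle⟩ := exists_pos_forall_le_norm_ofReal_add exp_neg_mem_slitPlane
  have stieltjes := differentiableAt_integral_div_add
    (Real.GammaIntegral_convergent hs).ofReal (a := fun t : ℝ => (Real.exp (-t) : ℂ))
    (by fun_prop) hε fun t => hle _ (Real.exp_nonneg _)
  have exp_neg_differentiableAt : DifferentiableAt ℂ (fun z => Complex.exp (-z)) z := by fun_prop
  exact (stieltjes.comp z exp_neg_differentiableAt).const_mul _

lemma exists_hasFPowerSeriesOnBall_of_ofReal_eq {F : ℂ → ℂ} {f : ℝ → ℝ}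
    (hF_ofReal : ∀ x : ℝ, F x = f x) {x : ℝ} {R : NNReal} (hR : 0 < R)
    (hF : DifferentiableOn ℂ F (Metric.closedBall x R)) :
    ∃ p : FormalMultilinearSeries ℝ ℝ ℝ, HasFPowerSeriesOnBall f p x R := by
  have complex_series : HasFPowerSeriesOnBall F _ (Complex.ofRealCLM x) R :=
    (hF.hasFPowerSeriesOnBall hR).restrictScalars (𝕜 := ℝ)
  have real_series := Complex.reCLM.comp_hasFPowerSeriesOnBall
    complex_series.compContinuousLinearMap
  have re_comp_ofReal : Complex.reCLM ∘ F ∘ Complex.ofRealCLM = f := by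
    ext y
    simp [hF_ofReal]
  rw [re_comp_ofReal, ← ofReal_norm, Complex.ofRealCLM_norm, ENNReal.ofReal_one, div_one]
    at real_series
  exact ⟨_, real_series⟩

lemma exists_hasFPowerSeriesOnBall_fermi {s : ℝ} (hs : 0 < s) (x : ℝ) {R : NNReal} (hR : 0 < R)
    (hRpi : R < Real.pi) :
    ∃ p : FormalMultilinearSeries ℝ ℝ ℝ, HasFPowerSeriesOnBall (fermi s) p x R := by
  refine exists_hasFPowerSeriesOnBall_of_ofReal_eq (complexFermi_ofReal s) hR fun z hz =>
    (differentiableAt_complexFermi hs ?_).differentiableWithinAt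
  calc |z.im| = |(z - x).im| := by simp
    _ ≤ ‖z - x‖ := Complex.abs_im_le_norm _
    _ ≤ R := mem_closedBall_iff_norm.1 hz
    _ < Real.pi := hRpi

lemma contDiff_fermi {s : ℝ} (hs : 0 < s) {n : WithTop ℕ∞} : ContDiff ℝ n (fermi s) := by
  refine AnalyticOnNhd.contDiff fun x _ => ?_
  have one_lt_pi : ((1 : NNReal) : ℝ) < Real.pi :=
    (by norm_num : ((1 : NNReal) : ℝ) < 3).trans Real.pi_gt_three
  obtain ⟨p, hp⟩ := exists_hasFPowerSeriesOnBall_fermi hs x one_pos one_lt_pi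
  exact hp.analyticAt

theorem calI_series_expansion_general (s : ℝ) (hs : 0 < s) (N : ℕ) (A B : ℝ)
    (hB : |B| < Real.pi) :
    ContDiff ℝ (⊤ : ℕ∞) (fermi s) ∧
    HasSum (fun n : ℕ =>
        iteratedDeriv (N + 2 * n) (fermi s) A /
          ((n.factorial : ℝ) * ((N + n).factorial : ℝ)) * (B / 2) ^ (N + 2 * n))
      (calI N s A B) := by
  refine ⟨contDiff_fermi hs, ?_⟩
  obtain ⟨R, hBR, hRpi⟩ := exists_between hB
  lift R to NNReal using (abs_nonneg B).trans hBR.le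
  obtain ⟨p, hp⟩ := exists_hasFPowerSeriesOnBall_fermi hs A
    (mod_cast (abs_nonneg B).trans_lt hBR) hRpi
  have hB_enorm : ‖B‖ₑ < R := mod_cast hBR
  refine (hasSum_iteratedDeriv_integral_cos_nat_mul_smul hp hB_enorm N).congr_fun fun n => ?_
  rw [smul_eq_mul, div_mul_comm]

/-- `φ_s` is smooth and, for `0 ≤ B < π`,
`𝓘_N^s(A,B) = Σ_{n≥0} φ_s^{(N+2n)}(A)/(n!(N+n)!) (B/2)^{N+2n}`. -/
theorem calI_series_expansion (s : ℝ) (hs : 0 < s) (N : ℕ) (A B : ℝ)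
    (hB : 0 ≤ B) (hBpi : B < Real.pi) :
    ContDiff ℝ (⊤ : ℕ∞) (fermi s) ∧
    HasSum (fun n : ℕ =>
        iteratedDeriv (N + 2 * n) (fermi s) A /
          ((n.factorial : ℝ) * ((N + n).factorial : ℝ)) * (B / 2) ^ (N + 2 * n))
      (calI N s A B) := by
  exact calI_series_expansion_general s hs N A B (abs_lt.2 ⟨by linarith, hBpi⟩)
end
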